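/- Suppose Λ is a finite simple graph having a vertex of degree at least 4. Then there exists a finite simple graph Γ such that there is an injective group homomorphism from G(Λ) into G(Γ), but Λ does not embed into Γ as a full (induced) subgraph. -/

import Mathlib

open SimpleGraph

/-- The set of commutator relations of a graph: one commutator for each edge. -/
def raagRels {V : Type} (G : SimpleGraph V) : Set (FreeGroup V) :=
  {r | ∃ u v : V, G.Adj u v ∧
    r = FreeGroup.of u * FreeGroup.of v * (FreeGroup.of u)⁻¹ * (FreeGroup.of v)⁻¹}

/-- The right-angled Artin group `A(G)` of a graph `G`. -/
abbrev RAAG {V : Type} (G : SimpleGraph V) : Type := PresentedGroup (raagRels G)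

/-- `G(Γ) = A(Γᶜ)`, the RAAG on the complement graph. -/
abbrev GG {V : Type} (G : SimpleGraph V) : Type := RAAG Gᶜ

/-- A linear forest: an acyclic graph all of whose vertices have degree at most 2. -/
def IsLinearForest {V : Type} (G : SimpleGraph V) : Prop :=
  G.IsAcyclic ∧ ∀ v : V, (G.neighborSet v).ncard ≤ 2

/-- The star of a vertex: the vertex together with its neighbours. -/
def starSet {V : Type} (G : SimpleGraph V) (v : V) : Set V :=
  insert v (G.neighborSet v)

/-- The double `D_v(G)` of `G` along the star of `v`: original vertices together with
copies of the vertices outside the star. -/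
def GraphDouble {V : Type} (G : SimpleGraph V) (v : V) :
    SimpleGraph (V ⊕ {w : V // w ∉ starSet G v}) :=
  SimpleGraph.fromRel (fun x y =>
    match x, y with
    | Sum.inl a, Sum.inl b => G.Adj a b
    | Sum.inr a, Sum.inr b => G.Adj a.1 b.1
    | Sum.inl a, Sum.inr b => a ∈ starSet G v ∧ G.Adj a b.1
    | Sum.inr _, Sum.inl _ => False)

/-- Subdivision of the edge `[v,w]` of `Λ`, with `none` as the new vertex. -/
def SubdivEdge {V : Type} (Λ : SimpleGraph V) (v w : V) : SimpleGraph (Option V) :=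
  SimpleGraph.fromRel (fun x y =>
    match x, y with
    | some a, some b => Λ.Adj a b ∧ ¬((a = v ∧ b = w) ∨ (a = w ∧ b = v))
    | some a, none => a = v ∨ a = w
    | none, some _ => False
    | none, none => False)

/-- The graph `Λ_u⁻(w₁,w₂)`, with `none` as the new vertex `v`. -/
def MinusGraph {V : Type} (Λ : SimpleGraph V) (u w₁ w₂ : V) : SimpleGraph (Option V) :=
  SimpleGraph.fromRel (fun x y =>
    match x, y with
    | some a, some b => Λ.Adj a b ∧
        ¬((a = u ∧ b = w₁) ∨ (a = w₁ ∧ b = u) ∨ (a = u ∧ b = w₂) ∨ (a = w₂ ∧ b = u))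
    | some a, none => a = w₁ ∨ a = u ∨ a = w₂
    | none, some _ => False
    | none, none => False)

/-- The graph `Λ_u⁺(w₁,w₂)`: `Λ_u⁻(w₁,w₂)` with the edge `[u,w₂]` added back. -/
def PlusGraph {V : Type} (Λ : SimpleGraph V) (u w₁ w₂ : V) : SimpleGraph (Option V) :=
  SimpleGraph.fromRel (fun x y =>
    (MinusGraph Λ u w₁ w₂).Adj x y ∨ (x = some u ∧ y = some w₂))

/-!
Let `w₁` and `w₂` be two neighbours of a vertex `u` of `Λ` of degree at least 4, and let
`Γ = Λ_u⁻(w₁,w₂)`: the vertex `u` is split into two adjacent halves `some u` and `none`, and the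
edges from `u` to `w₁` and `w₂` are moved to `none`. Contracting the edge between the halves gives
back `Λ`.

For every edge contraction, sending `u` to `none` and every other generator `x` to `a x a⁻¹`, where
`a` is the generator `some u`, embeds the group of the contraction into `G(Γ)`. To see this, map
`G(Γ)` to an iterated HNN extension of `G(Λ)` in which two stable letters `a` and `b` take the
places of the halves. By Britton's lemma, `a g a⁻¹` with `g` in `G(Λ)` lies in `G(Λ)` only if `g`
commutes with `a`. Hence `a g a⁻¹` belongs to the subgroup associated with `b` exactly when `g`
belongs to the subgroup generated by the non-neighbours of `u` in `Λ`, and so `G(Λ)`, written as a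
subgroup of an HNN extension with stable letter `u`, is mapped injectively because reduced words
go to reduced words.

On the other hand, `Γ` has fewer vertices of degree at least `deg u` than `Λ`: the halves of `u`
have degrees `3` and `deg u - 1`, and no other degree goes up. So `Λ` is not a subgraph of `Γ`.
-/

section HNN

open HNNExtension

variable {G K : Type*} [Group G] [Group K] {A B : Subgroup G} {A' B' : Subgroup K}
  {φ : A ≃* B} {φ' : A' ≃* B'}

theorem hnnExtension_exists_reducedWord_prod_eq (x : HNNExtension G A B φ) :
    ∃ w : NormalWord.ReducedWord G A B, w.prod φ = x := by
  obtain ⟨d⟩ := NormalWord.TransversalPair.nonempty G A B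
  exact ⟨(NormalWord.equiv φ d x).toReducedWord, (NormalWord.equiv φ d).symm_apply_apply x⟩

theorem hnnExtension_mem_of_conj_mem_range {g : G}
    (h : (t * of g * t⁻¹ : HNNExtension G A B φ) ∈ (of : G →* HNNExtension G A B φ).range) :
    g ∈ A := by
  by_contra hg
  let w : NormalWord.ReducedWord G A B :=
    { head := 1
      toList := [(1, g), (-1, 1)]
      chain := by simp [hg] }
  have hw : w.prod φ = t * of g * t⁻¹ := by simp [NormalWord.ReducedWord.prod, w, mul_assoc]
  have hnil := ReducedWord.toList_eq_nil_of_mem_of_range φ w (hw ▸ h)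
  exact List.cons_ne_nil _ _ hnil

-- The hypotheses say exactly that `F` takes reduced words to reduced words.
theorem hnnExtension_hom_injective {F : HNNExtension G A B φ →* HNNExtension K A' B' φ'}
    {f : G →* K} (hf : Function.Injective f) (hA : ∀ g, f g ∈ A' → g ∈ A)
    (hB : ∀ g, f g ∈ B' → g ∈ B) (hof : ∀ g, F (of g) = of (f g)) (ht : F t = t) :
    Function.Injective F := by
  rw [injective_iff_map_eq_one]
  intro x hx
  obtain ⟨w, rfl⟩ := hnnExtension_exists_reducedWord_prod_eq x
  have hsub : ∀ (e : ℤˣ) (g : G), f g ∈ toSubgroup A' B' e → g ∈ toSubgroup A B e := by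
    intro e g
    rcases Int.units_eq_one_or e with rfl | rfl
    exacts [hA g, hB g]
  let w' : NormalWord.ReducedWord K A' B' :=
    { head := f w.head
      toList := w.toList.map fun a => (a.1, f a.2)
      chain := List.isChain_map_of_isChain _ (fun a _ h hm => h (hsub a.1 a.2 hm)) w.chain }
  have hw' : w'.prod φ' = 1 := by
    rw [← hx]
    simp [w', NormalWord.ReducedWord.prod, map_list_prod, hof, ht, Function.comp_def]
  have hnil : w.toList = [] := List.map_eq_nil_iff.1
    (ReducedWord.toList_eq_nil_of_mem_of_range φ' w' (hw' ▸ one_mem _))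
  have hprod : w.prod φ = of w.head := by simp [NormalWord.ReducedWord.prod, hnil]
  rw [hprod, hof, ← map_one of] at hx
  rw [hprod, (map_eq_one_iff f hf).1 (of_injective φ' hx), map_one]

end HNN

/-- The HNN extension of `G` obtained by adjoining a stable letter that commutes with every element
of `C`. -/
abbrev CentralizingHNN (G : Type*) [Group G] (C : Subgroup G) : Type _ :=
  HNNExtension G C C (MulEquiv.refl C)

namespace CentralizingHNN

open HNNExtension

variable {G K : Type*} [Group G] [Group K] {C : Subgroup G} {D : Subgroup K}

theorem commute_t_of {c : G} (hc : c ∈ C) : Commute (t : CentralizingHNN G C) (of c) :=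
  t_mul_of (φ := MulEquiv.refl C) ⟨c, hc⟩

/-- The homomorphism between centralizing HNN extensions that extends a homomorphism of the base
groups and fixes the stable letter. -/
def map (f : G →* K) (hf : C ≤ D.comap f) : CentralizingHNN G C →* CentralizingHNN K D :=
  HNNExtension.lift (of.comp f) t fun c => commute_t_of (hf c.2)

@[simp]
theorem map_of (f : G →* K) (hf : C ≤ D.comap f) (g : G) : map f hf (of g) = of (f g) :=
  lift_of _ _ _ g

@[simp]
theorem map_t (f : G →* K) (hf : C ≤ D.comap f) : map f hf t = t :=
  lift_t _ _ _

theorem map_injective {f : G →* K} (hf : Function.Injective f) (hC : C = D.comap f) :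
    Function.Injective (map f hC.le) :=
  have hmem : ∀ g, f g ∈ D → g ∈ C := fun _ hg => hC.ge hg
  hnnExtension_hom_injective hf hmem hmem (map_of f hC.le) (map_t f hC.le)

end CentralizingHNN

namespace RAAG

variable {V : Type} {G : SimpleGraph V} {K : Type*} [Group K]

section UniversalProperty

/-- The generator of the right-angled Artin group `A(G)` attached to a vertex of `G`. -/
def of (G : SimpleGraph V) (v : V) : RAAG G :=
  PresentedGroup.of v

theorem commute_of {u v : V} (h : G.Adj u v) : Commute (of G u) (of G v) := by
  have hrel := PresentedGroup.one_of_mem (rels := raagRels G) ⟨u, v, h, rfl⟩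
  simp only [map_mul, map_inv, mul_inv_eq_iff_eq_mul, one_mul] at hrel
  exact hrel

/-- The homomorphism from `A(G)` defined by images of the generators, those of adjacent vertices
commuting. -/
def lift (f : V → K) (hf : ∀ u v, G.Adj u v → Commute (f u) (f v)) : RAAG G →* K :=
  PresentedGroup.toGroup (f := f) <| by
    rintro _ ⟨u, v, huv, rfl⟩
    simp only [map_mul, map_inv, FreeGroup.lift_apply_of, (hf u v huv).eq, mul_inv_cancel_right,
      mul_inv_cancel]

@[simp]
theorem lift_of (f : V → K) (hf : ∀ u v, G.Adj u v → Commute (f u) (f v)) (v : V) :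
    lift f hf (of G v) = f v :=
  PresentedGroup.toGroup.of _

theorem hom_ext {f g : RAAG G →* K} (h : ∀ v, f (of G v) = g (of G v)) : f = g :=
  PresentedGroup.ext h

theorem commute_update [DecidableEq V] {f : V → K} {u : V} {k : K}
    (hf : ∀ x y, x ≠ u → y ≠ u → G.Adj x y → Commute (f x) (f y))
    (hk : ∀ x, G.Adj u x → Commute k (f x)) (x y : V) (hxy : G.Adj x y) :
    Commute (Function.update f u k x) (Function.update f u k y) := by
  by_cases hx : x = u
  · subst hx
    simpa [hxy.ne'] using hk y hxy
  by_cases hy : y = u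
  · subst hy
    simpa [hxy.ne] using (hk x hxy.symm).symm
  simpa [hx, hy] using hf x y hx hy hxy

theorem commute_elim {G : SimpleGraph (Option V)} {f : V → K} {k : K}
    (hf : ∀ x y, G.Adj (some x) (some y) → Commute (f x) (f y))
    (hk : ∀ x, G.Adj none (some x) → Commute k (f x)) :
    ∀ x y, G.Adj x y → Commute (x.elim k f) (y.elim k f)
  | none, none, h => (h.ne rfl).elim
  | none, some y, h => hk y h
  | some x, none, h => (hk x h.symm).symm
  | some x, some y, h => hf x y h

end UniversalProperty

section Parabolic

/-- The standard parabolic subgroup of `A(G)` generated by a set of vertices. -/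
def parabolic (G : SimpleGraph V) (S : Set V) : Subgroup (RAAG G) :=
  Subgroup.closure (of G '' S)

theorem of_mem_parabolic {S : Set V} {v : V} (hv : v ∈ S) : of G v ∈ parabolic G S :=
  Subgroup.subset_closure ⟨v, hv, rfl⟩

theorem parabolic_le_iff {S : Set V} {H : Subgroup (RAAG G)} :
    parabolic G S ≤ H ↔ ∀ v ∈ S, of G v ∈ H := by
  rw [parabolic, Subgroup.closure_le, Set.image_subset_iff]
  rfl

theorem parabolic_mono {S T : Set V} (h : S ⊆ T) : parabolic G S ≤ parabolic G T :=
  parabolic_le_iff.2 fun _ hv => of_mem_parabolic (h hv)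

theorem commute_map_of_mem_parabolic {S : Set V} {f : RAAG G →* K} {k : K}
    (hk : ∀ v ∈ S, Commute k (f (of G v))) {g : RAAG G} (hg : g ∈ parabolic G S) :
    Commute k (f g) := by
  have hle : parabolic G S ≤ (Subgroup.centralizer {k}).comap f :=
    parabolic_le_iff.2 fun v hv => Subgroup.mem_centralizer_singleton_iff.2 (hk v hv).symm.eq
  exact (Subgroup.mem_centralizer_singleton_iff.1 (hle hg)).symm

/-- The retraction of `A(G)` onto the standard parabolic subgroup on `S`, which kills the vertices
outside `S`. -/
noncomputable def retraction (G : SimpleGraph V) (S : Set V) : RAAG G →* RAAG G :=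
  lift (S.mulIndicator (of G)) fun u v huv => by
    classical
    simp only [Set.mulIndicator_apply]
    split_ifs
    exacts [commute_of huv, Commute.one_right _, Commute.one_left _, Commute.one_left _]

theorem retraction_eq_self {S : Set V} {g : RAAG G} (hg : g ∈ parabolic G S) :
    retraction G S g = g := by
  have hle : parabolic G S ≤ (retraction G S).eqLocus (MonoidHom.id _) :=
    parabolic_le_iff.2 fun v hv => by
      change retraction G S (of G v) = of G v
      rw [retraction, lift_of, Set.mulIndicator_of_mem hv]
  exact hle hg

theorem retraction_mem_parabolic_inter {S T : Set V} {g : RAAG G} (hg : g ∈ parabolic G T) :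
    retraction G S g ∈ parabolic G (S ∩ T) := by
  have hle : parabolic G T ≤ (parabolic G (S ∩ T)).comap (retraction G S) :=
    parabolic_le_iff.2 fun v hv => by
      rw [Subgroup.mem_comap, retraction, lift_of]
      by_cases hS : v ∈ S
      · rw [Set.mulIndicator_of_mem hS]
        exact of_mem_parabolic ⟨hS, hv⟩
      · rw [Set.mulIndicator_of_notMem hS]
        exact one_mem _
  exact hle hg

theorem parabolic_inter (S T : Set V) :
    parabolic G (S ∩ T) = parabolic G S ⊓ parabolic G T := by
  refine le_antisymm
    (le_inf (parabolic_mono Set.inter_subset_left) (parabolic_mono Set.inter_subset_right)) ?_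
  rintro g ⟨hS, hT⟩
  simpa only [retraction_eq_self hS] using retraction_mem_parabolic_inter (S := S) hT

end Parabolic

section VertexHNN

variable [DecidableEq V]

/-- The homomorphism from `A(G)` to a centralizing HNN extension of `A(G)` itself that replaces the
generator of `u` by the stable letter. Keeping all of `A(G)` as the base group, rather than its
parabolic subgroup on the vertices other than `u`, avoids passing to an induced subgraph. -/
def toVertexHNN (G : SimpleGraph V) (u : V) :
    RAAG G →* CentralizingHNN (RAAG G) (parabolic G (G.neighborSet u)) :=
  lift (Function.update (fun x => HNNExtension.of (of G x)) u HNNExtension.t) <|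
    commute_update (fun _ _ _ _ h => (commute_of h).map _)
      fun _ h => CentralizingHNN.commute_t_of (of_mem_parabolic h)

theorem toVertexHNN_of_self (u : V) : toVertexHNN G u (of G u) = HNNExtension.t := by
  rw [toVertexHNN, lift_of, Function.update_self]

theorem toVertexHNN_of_ne {u x : V} (hx : x ≠ u) :
    toVertexHNN G u (of G x) = HNNExtension.of (of G x) := by
  rw [toVertexHNN, lift_of, Function.update_of_ne hx]

theorem toVertexHNN_injective (u : V) : Function.Injective (toVertexHNN G u) := by
  let ρ : CentralizingHNN (RAAG G) (parabolic G (G.neighborSet u)) →* RAAG G :=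
    HNNExtension.lift (MonoidHom.id _) (of G u) fun c =>
      commute_map_of_mem_parabolic (f := MonoidHom.id _) (fun _ h => commute_of h) c.2
  have hρ : ρ.comp (toVertexHNN G u) = MonoidHom.id _ := hom_ext fun x => by
    by_cases hx : x = u
    · subst hx
      rw [MonoidHom.comp_apply, toVertexHNN_of_self]
      exact HNNExtension.lift_t ..
    · rw [MonoidHom.comp_apply, toVertexHNN_of_ne hx]
      exact HNNExtension.lift_of ..
  exact Function.LeftInverse.injective (DFunLike.congr_fun hρ)

end VertexHNN

end RAAG

section Contraction

open RAAG

variable {V : Type} (Γ : SimpleGraph (Option V)) (u : V)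

/-- The graph obtained from `Γ` by identifying the vertex `none` with `some u`. It is used when
these two vertices are adjacent, so that it is an edge contraction; putting one endpoint of the
edge at `none` identifies the vertices of the contracted graph with `V`. -/
def contract : SimpleGraph V :=
  Γ.map fun x => x.getD u

/-- The vertices of `V` not adjacent to `y` in `Γ`: in `G(Γ)` their generators commute with that
of `y`. The vertex `y` itself is not counted. -/
def nonNeighbors (y : Option V) : Set V :=
  some ⁻¹' Γᶜ.neighborSet y

variable {Γ u}

theorem contract_adj_of_ne {x y : V} (hx : x ≠ u) (hy : y ≠ u) :
    (contract Γ u).Adj x y ↔ Γ.Adj (some x) (some y) := by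
  rw [contract, map_adj']
  constructor
  · rintro ⟨-, _ | x', _ | y', h, rfl, rfl⟩
    exacts [absurd rfl hx, absurd rfl hx, absurd rfl hy, h]
  · exact fun h => ⟨fun hxy => h.ne (congrArg some hxy), _, _, h, rfl, rfl⟩

theorem contract_adj_self {x : V} (hx : x ≠ u) :
    (contract Γ u).Adj u x ↔ Γ.Adj (some u) (some x) ∨ Γ.Adj none (some x) := by
  rw [contract, map_adj']
  constructor
  · rintro ⟨-, _ | u', _ | x', h, hu, rfl⟩
    · exact absurd rfl hx
    · exact Or.inr h
    · exact absurd rfl hx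
    · obtain rfl : u' = u := hu
      exact Or.inl h
  · rintro (h | h)
    exacts [⟨hx.symm, _, _, h, rfl, rfl⟩, ⟨hx.symm, _, _, h, rfl, rfl⟩]

theorem neighborSet_compl_contract :
    (contract Γ u)ᶜ.neighborSet u = nonNeighbors Γ (some u) ∩ nonNeighbors Γ none := by
  ext x
  by_cases hx : x = u
  · simp [hx, nonNeighbors]
  · simp [hx, nonNeighbors, contract_adj_self, Ne.symm hx]

-- If `x` is adjacent to at most one endpoint of the contracted edge, then the contraction is
-- injective on the neighbours of `x`.
theorem ncard_neighborSet_some_le_contract [Finite V] {x : V} (hx : x ≠ u)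
    (h : Γ.Adj none (some x) → ¬ Γ.Adj (some u) (some x)) :
    (Γ.neighborSet (some x)).ncard ≤ ((contract Γ u).neighborSet x).ncard := by
  refine Set.ncard_le_ncard_of_injOn (fun y => y.getD u) ?_ ?_
  · rintro (_ | y) hy
    · exact map_adj_apply' (f := fun y => Option.getD y u) hy hx
    · exact map_adj_apply' (f := fun y => Option.getD y u) hy fun hxy => hy.ne (congrArg some hxy)
  · rintro (_ | y) hy (_ | z) hz hyz
    · rfl
    · obtain rfl : u = z := hyz
      exact (h hy.symm hz.symm).elim
    · obtain rfl : y = u := hyz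
      exact (h hz.symm hy.symm).elim
    · exact congrArg some hyz

section ExpandHom

variable [DecidableEq V]

/-- The homomorphism that exhibits the group of an edge contraction as a subgroup of `G(Γ)`. It
sends `u` to `none` and conjugates the other generators by `some u`; up to an inner automorphism it
fixes these and sends `u` to the conjugate of `none` by the inverse of `some u`. -/
def expandHom (Γ : SimpleGraph (Option V)) (u : V) : GG (contract Γ u) →* GG Γ :=
  lift (Function.update (fun x => MulAut.conj (of Γᶜ (some u)) (of Γᶜ (some x))) u (of Γᶜ none)) <|
    commute_update
      (fun x y hx hy h => by
        rw [compl_adj, contract_adj_of_ne hx hy] at h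
        refine (commute_of ?_).map _
        simpa using h)
      (fun x h => by
        rw [← mem_neighborSet, neighborSet_compl_contract] at h
        rw [MulAut.conj_apply, (commute_of h.1).mul_inv_cancel]
        exact commute_of h.2)

theorem expandHom_of_self : expandHom Γ u (of _ u) = of Γᶜ none := by
  rw [expandHom, lift_of, Function.update_self]

theorem expandHom_of_ne {x : V} (hx : x ≠ u) :
    expandHom Γ u (of _ x) = MulAut.conj (of Γᶜ (some u)) (of Γᶜ (some x)) := by
  rw [expandHom, lift_of, Function.update_of_ne hx]

end ExpandHom

/-- The group of the contraction of `Γ`, extended by a stable letter that plays the role of the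
generator `some u` of `G(Γ)`. -/
abbrev InnerHNN (Γ : SimpleGraph (Option V)) (u : V) : Type :=
  CentralizingHNN (GG (contract Γ u)) (parabolic _ (nonNeighbors Γ (some u)))

/-- The extension of `InnerHNN Γ u` by a stable letter that plays the role of the generator `none`
of `G(Γ)`. -/
abbrev OuterHNN (Γ : SimpleGraph (Option V)) (u : V) : Type :=
  CentralizingHNN (InnerHNN Γ u)
    ((parabolic _ (nonNeighbors Γ none)).map HNNExtension.of)

/-- The embedding of the group of the contraction of `Γ` into `InnerHNN Γ u`, conjugated by the
stable letter. -/
def conjInner (Γ : SimpleGraph (Option V)) (u : V) : GG (contract Γ u) →* InnerHNN Γ u :=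
  (MulAut.conj HNNExtension.t).toMonoidHom.comp HNNExtension.of

theorem conjInner_injective : Function.Injective (conjInner Γ u) :=
  (MulAut.conj _).injective.comp (HNNExtension.of_injective _)

theorem conjInner_eq_of {g : GG (contract Γ u)}
    (hg : g ∈ parabolic _ (nonNeighbors Γ (some u))) :
    conjInner Γ u g = HNNExtension.of g :=
  (CentralizingHNN.commute_t_of hg).mul_inv_cancel

-- Britton's lemma: `t g t⁻¹` lies in the base group only if `t` commutes with `g`.
theorem parabolic_neighborSet_eq_comap_conjInner :
    parabolic _ ((contract Γ u)ᶜ.neighborSet u) =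
      ((parabolic _ (nonNeighbors Γ none)).map HNNExtension.of).comap (conjInner Γ u) := by
  ext g
  rw [neighborSet_compl_contract, parabolic_inter, Subgroup.mem_inf, Subgroup.mem_comap]
  constructor
  · rintro ⟨hu, hnone⟩
    rw [conjInner_eq_of hu]
    exact Subgroup.mem_map_of_mem _ hnone
  · rintro ⟨c, hc, hcg⟩
    have hu := hnnExtension_mem_of_conj_mem_range ⟨c, hcg⟩
    rw [conjInner_eq_of hu] at hcg
    exact ⟨hu, HNNExtension.of_injective _ hcg ▸ hc⟩

section ToOuterHNN

variable [DecidableEq V]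

/-- The images in `InnerHNN Γ u` of the generators of `G(Γ)` other than `none`. -/
def innerGenerator (Γ : SimpleGraph (Option V)) (u : V) : V → InnerHNN Γ u :=
  Function.update (fun x => HNNExtension.of (of _ x)) u HNNExtension.t

theorem commute_innerGenerator (x y : V) (h : Γᶜ.Adj (some x) (some y)) :
    Commute (innerGenerator Γ u x) (innerGenerator Γ u y) := by
  refine commute_update (G := Γᶜ.comap some) (fun x y hx hy h => ?_) (fun x h => ?_) x y h
  · refine (commute_of ?_).map _
    simpa [contract_adj_of_ne hx hy] using h
  · exact CentralizingHNN.commute_t_of (of_mem_parabolic h)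

theorem commute_t_of_innerGenerator (hΓ : Γ.Adj none (some u)) (x : V) (h : Γᶜ.Adj none (some x)) :
    Commute (HNNExtension.t : OuterHNN Γ u) (HNNExtension.of (innerGenerator Γ u x)) := by
  have hx : x ≠ u := by
    rintro rfl
    exact h.2 hΓ
  rw [innerGenerator, Function.update_of_ne hx]
  exact CentralizingHNN.commute_t_of (Subgroup.mem_map_of_mem _ (of_mem_parabolic h))

/-- The homomorphism from `G(Γ)` to the iterated HNN extension that sends `some u` and `none` to the
two stable letters. These satisfy no common relation, whence the adjacency hypothesis. -/
def toOuterHNN (hΓ : Γ.Adj none (some u)) : GG Γ →* OuterHNN Γ u :=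
  lift (fun y => y.elim HNNExtension.t fun x => HNNExtension.of (innerGenerator Γ u x)) <|
    commute_elim (fun x y h => (commute_innerGenerator x y h).map _)
      (commute_t_of_innerGenerator hΓ)

theorem toOuterHNN_of_none (hΓ : Γ.Adj none (some u)) :
    toOuterHNN hΓ (of _ none) = HNNExtension.t :=
  lift_of _ _ _

theorem toOuterHNN_of_some_self (hΓ : Γ.Adj none (some u)) :
    toOuterHNN hΓ (of _ (some u)) = HNNExtension.of HNNExtension.t := by
  rw [toOuterHNN, lift_of, Option.elim_some, innerGenerator, Function.update_self]

theorem toOuterHNN_of_some_of_ne (hΓ : Γ.Adj none (some u)) {x : V} (hx : x ≠ u) :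
    toOuterHNN hΓ (of _ (some x)) = HNNExtension.of (HNNExtension.of (of _ x)) := by
  rw [toOuterHNN, lift_of, Option.elim_some, innerGenerator, Function.update_of_ne hx]

theorem toOuterHNN_comp_expandHom (hΓ : Γ.Adj none (some u)) :
    (toOuterHNN hΓ).comp (expandHom Γ u) =
      (CentralizingHNN.map (conjInner Γ u) parabolic_neighborSet_eq_comap_conjInner.le).comp
        (toVertexHNN _ u) := by
  refine hom_ext fun x => ?_
  simp only [MonoidHom.comp_apply]
  by_cases hx : x = u
  · subst hx
    rw [expandHom_of_self, toOuterHNN_of_none, toVertexHNN_of_self, CentralizingHNN.map_t]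
  · rw [expandHom_of_ne hx, toVertexHNN_of_ne hx, CentralizingHNN.map_of]
    simp only [MulAut.conj_apply, map_mul, map_inv, toOuterHNN_of_some_self,
      toOuterHNN_of_some_of_ne hΓ hx, conjInner, MonoidHom.comp_apply, MulEquiv.toMonoidHom_eq_coe,
      MonoidHom.coe_coe]

end ToOuterHNN

theorem expandHom_injective [DecidableEq V] (hΓ : Γ.Adj none (some u)) :
    Function.Injective (expandHom Γ u) := by
  refine Function.Injective.of_comp (f := toOuterHNN hΓ) ?_
  rw [← MonoidHom.coe_comp, toOuterHNN_comp_expandHom, MonoidHom.coe_comp]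
  exact (CentralizingHNN.map_injective conjInner_injective
    parabolic_neighborSet_eq_comap_conjInner).comp (toVertexHNN_injective u)

end Contraction

theorem ncard_setOf_le_ncard_neighborSet_mono {V W : Type*} [Finite W] {G : SimpleGraph V}
    {H : SimpleGraph W} (h : G ⊑ H) (d : ℕ) :
    {x | d ≤ (G.neighborSet x).ncard}.ncard ≤ {y | d ≤ (H.neighborSet y).ncard}.ncard := by
  obtain ⟨f⟩ := h
  have hdeg : ∀ x, (G.neighborSet x).ncard ≤ (H.neighborSet (f x)).ncard := fun x =>
    Set.ncard_le_ncard_of_injOn f (fun _ hy => f.toHom.map_adj hy) f.injective.injOn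
  exact Set.ncard_le_ncard_of_injOn f (fun x hx => le_trans hx (hdeg x)) f.injective.injOn

namespace MinusGraph

variable {V : Type} {Λ : SimpleGraph V} {u w₁ w₂ : V}

theorem adj_some_some {a b : V} : (MinusGraph Λ u w₁ w₂).Adj (some a) (some b) ↔
    Λ.Adj a b ∧ ¬ (a = u ∧ (b = w₁ ∨ b = w₂)) ∧ ¬ (b = u ∧ (a = w₁ ∨ a = w₂)) := by
  simp only [MinusGraph, fromRel_adj, ne_eq, Option.some.injEq, Λ.adj_comm b a]
  have := Λ.ne_of_adj (a := a) (b := b)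
  tauto

theorem adj_none_some {a : V} :
    (MinusGraph Λ u w₁ w₂).Adj none (some a) ↔ a = w₁ ∨ a = u ∨ a = w₂ := by
  simp [MinusGraph]

theorem contract_eq (h₁ : Λ.Adj u w₁) (h₂ : Λ.Adj u w₂) :
    contract (MinusGraph Λ u w₁ w₂) u = Λ := by
  have hself : ∀ {x}, x ≠ u → ((contract (MinusGraph Λ u w₁ w₂) u).Adj u x ↔ Λ.Adj u x) := by
    intro x hx
    rw [contract_adj_self hx, adj_some_some, adj_none_some]
    have : x = w₁ ∨ x = w₂ → Λ.Adj u x := by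
      rintro (rfl | rfl)
      exacts [h₁, h₂]
    tauto
  ext x y
  by_cases hx : x = u <;> by_cases hy : y = u
  · simp [hx, hy]
  · rw [hx, hself hy]
  · rw [hy, adj_comm, hself hx, adj_comm]
  · rw [contract_adj_of_ne hx hy, adj_some_some]
    tauto

theorem ncard_neighborSet_none_le :
    ((MinusGraph Λ u w₁ w₂).neighborSet none).ncard ≤ 3 := by
  have hsub : (MinusGraph Λ u w₁ w₂).neighborSet none ⊆ {some w₁, some u, some w₂} := by
    rintro (_ | a) ha
    · simp at ha
    · simpa [adj_none_some] using ha
  calc ((MinusGraph Λ u w₁ w₂).neighborSet none).ncard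
    _ ≤ ({some w₁, some u, some w₂} : Set (Option V)).ncard := Set.ncard_le_ncard hsub
    _ ≤ ({some u, some w₂} : Set (Option V)).ncard + 1 := Set.ncard_insert_le _ _
    _ ≤ ({some w₂} : Set (Option V)).ncard + 1 + 1 := by gcongr; exact Set.ncard_insert_le _ _
    _ = 3 := by rw [Set.ncard_singleton]

theorem ncard_neighborSet_some_self_lt [Finite V] (h₁ : Λ.Adj u w₁) (h₂ : Λ.Adj u w₂)
    (hw : w₁ ≠ w₂) :
    ((MinusGraph Λ u w₁ w₂).neighborSet (some u)).ncard < (Λ.neighborSet u).ncard := by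
  have hsub : (MinusGraph Λ u w₁ w₂).neighborSet (some u) ⊆
      insert none (some '' (Λ.neighborSet u \ {w₁, w₂})) := by
    rintro (_ | a) ha
    · exact Set.mem_insert _ _
    · have ha' := adj_some_some.1 ha
      exact Or.inr ⟨a, ⟨ha'.1, fun h => ha'.2.1 ⟨rfl, h⟩⟩, rfl⟩
  have hdiff : (Λ.neighborSet u \ {w₁, w₂}).ncard + 2 = (Λ.neighborSet u).ncard := by
    rw [← Set.ncard_pair hw]
    exact Set.ncard_sdiff_add_ncard_of_subset (Set.pair_subset h₁ h₂)
  calc ((MinusGraph Λ u w₁ w₂).neighborSet (some u)).ncard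
    _ ≤ (insert none (some '' (Λ.neighborSet u \ {w₁, w₂}))).ncard := Set.ncard_le_ncard hsub
    _ ≤ (some '' (Λ.neighborSet u \ {w₁, w₂})).ncard + 1 := Set.ncard_insert_le _ _
    _ ≤ (Λ.neighborSet u \ {w₁, w₂}).ncard + 1 := by gcongr; exact Set.ncard_image_le
    _ < (Λ.neighborSet u).ncard := by lia

theorem ncard_neighborSet_some_le [Finite V] (h₁ : Λ.Adj u w₁) (h₂ : Λ.Adj u w₂) {x : V}
    (hx : x ≠ u) :
    ((MinusGraph Λ u w₁ w₂).neighborSet (some x)).ncard ≤ (Λ.neighborSet x).ncard := by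
  conv_rhs => rw [← contract_eq h₁ h₂]
  refine ncard_neighborSet_some_le_contract hx ?_
  rw [adj_none_some, adj_some_some]
  tauto

theorem not_isContained [Finite V] (h₁ : Λ.Adj u w₁) (h₂ : Λ.Adj u w₂) (hw : w₁ ≠ w₂)
    (hu : 4 ≤ (Λ.neighborSet u).ncard) : ¬ Λ ⊑ MinusGraph Λ u w₁ w₂ := by
  intro hΛ
  let P : Set V := {x | (Λ.neighborSet u).ncard ≤ (Λ.neighborSet x).ncard}
  let Q : Set (Option V) :=
    {y | (Λ.neighborSet u).ncard ≤ ((MinusGraph Λ u w₁ w₂).neighborSet y).ncard}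
  have hPQ : P.ncard ≤ Q.ncard := ncard_setOf_le_ncard_neighborSet_mono hΛ _
  have hQ : Q ⊆ some '' (P \ {u}) := by
    rintro (_ | x) hx
    · exact absurd (hu.trans (le_trans hx ncard_neighborSet_none_le)) (by norm_num)
    · have hxu : x ≠ u := by
        rintro rfl
        exact (ncard_neighborSet_some_self_lt h₁ h₂ hw).not_ge hx
      exact ⟨x, ⟨le_trans hx (ncard_neighborSet_some_le h₁ h₂ hxu), hxu⟩, rfl⟩
  have hQP : Q.ncard < P.ncard :=
    calc Q.ncard ≤ (some '' (P \ {u})).ncard := Set.ncard_le_ncard hQ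
      _ ≤ (P \ {u}).ncard := Set.ncard_image_le
      _ < P.ncard := Set.ncard_sdiff_singleton_lt_of_mem (le_refl (Λ.neighborSet u).ncard)
  exact hQP.not_ge hPQ

end MinusGraph

/-- If `Λ` has a vertex of degree at least 4, then there is a finite graph `Γ` with
`G(Λ) ↪ G(Γ)` but `Λ` not an induced subgraph of `Γ`. -/
theorem statement16 {V : Type} [Fintype V] (Λ : SimpleGraph V)
    (h : ∃ u : V, 4 ≤ (Λ.neighborSet u).ncard) :
    ∃ (W : Type) (_ : Fintype W) (Γ : SimpleGraph W),
      (∃ φ : GG Λ →* GG Γ, Function.Injective φ) ∧ ¬ Nonempty (Λ ↪g Γ) := by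
  obtain ⟨u, hu⟩ := h
  obtain ⟨w₁, h₁, w₂, h₂, hw⟩ := (Set.one_lt_ncard).1 (show 1 < (Λ.neighborSet u).ncard by lia)
  refine ⟨Option V, inferInstance, MinusGraph Λ u w₁ w₂, ?_, ?_⟩
  · classical
    have hadj : (MinusGraph Λ u w₁ w₂).Adj none (some u) :=
      MinusGraph.adj_none_some.2 (.inr (.inl rfl))
    have hφ : ∃ φ : GG (contract (MinusGraph Λ u w₁ w₂) u) →* GG (MinusGraph Λ u w₁ w₂),
        Function.Injective φ := ⟨_, expandHom_injective hadj⟩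
    rwa [MinusGraph.contract_eq h₁ h₂] at hφ
  · rintro ⟨e⟩
    exact MinusGraph.not_isContained h₁ h₂ hw hu ⟨e.toCopy⟩
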